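/- The operator A = (w⟨w,·⟩ − v⟨v,·⟩)/sin θ attains Fleming's bound and maximizes the expectation difference: for unit vectors v, w in a complex Hilbert space H with ⟨v, w⟩ = cos θ, θ ∈ (0, π/2), this bounded self-adjoint operator satisfies ⟨A⟩_w − ⟨A⟩_v = 2 sin θ and δ_A = tan θ. -/

import Mathlib

open scoped InnerProductSpace

noncomputable def expVal {H : Type*} [NormedAddCommGroup H] [InnerProductSpace ℂ H]
    (A : H →L[ℂ] H) (v : H) : ℝ := (⟪v, A v⟫_ℂ).re

noncomputable def uncert {H : Type*} [NormedAddCommGroup H] [InnerProductSpace ℂ H]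
    (A : H →L[ℂ] H) (v : H) : ℝ :=
  Real.sqrt ((⟪v, A (A v)⟫_ℂ).re - (expVal A v) ^ 2)

noncomputable def discern {H : Type*} [NormedAddCommGroup H] [InnerProductSpace ℂ H]
    (A : H →L[ℂ] H) (v w : H) : ℝ :=
  |expVal A w - expVal A v| / (uncert A v + uncert A w)

/-- The rank-one operator `z ↦ ⟨y, z⟩ x`. -/
noncomputable def rankOne {H : Type*} [NormedAddCommGroup H] [InnerProductSpace ℂ H]
    (x y : H) : H →L[ℂ] H := (innerSL ℂ y).smulRight x

/-!
Let `D` be the projection onto `ℂ w` minus the projection onto `ℂ v`. Its square multiplies both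
`v` and `w` by `1 - |⟨v, w⟩|² = sin² θ`, while its expectation values at `w` and `v` are `± sin² θ`.
Both uncertainties are therefore `√(sin² θ - sin⁴ θ) = sin θ cos θ`. Discernability is unchanged
when an operator is rescaled, so `A = D / sin θ` has discernability
`2 sin² θ / (2 sin θ cos θ) = tan θ`, while its expectation values differ by `2 sin θ`.
-/

section Scaling

variable {H : Type*} [NormedAddCommGroup H] [InnerProductSpace ℂ H]

lemma expVal_ofReal_smul (r : ℝ) (A : H →L[ℂ] H) (v : H) :
    expVal ((r : ℂ) • A) v = r * expVal A v := by
  simp [expVal]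

lemma uncert_ofReal_smul (r : ℝ) (A : H →L[ℂ] H) (v : H) :
    uncert ((r : ℂ) • A) v = |r| * uncert A v := by
  have hsq : (⟪v, ((r : ℂ) • A) (((r : ℂ) • A) v)⟫_ℂ).re = r ^ 2 * (⟪v, A (A v)⟫_ℂ).re := by
    simp [sq, mul_assoc]
  rw [uncert, hsq, expVal_ofReal_smul, mul_pow, ← mul_sub, Real.sqrt_mul (sq_nonneg r),
    Real.sqrt_sq_eq_abs, uncert]

lemma discern_ofReal_smul {r : ℝ} (hr : r ≠ 0) (A : H →L[ℂ] H) (v w : H) :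
    discern ((r : ℂ) • A) v w = discern A v w := by
  simp only [discern, expVal_ofReal_smul, uncert_ofReal_smul, ← mul_sub, ← mul_add, abs_mul]
  exact mul_div_mul_left _ _ (abs_ne_zero.mpr hr)

lemma expVal_neg (A : H →L[ℂ] H) (v : H) : expVal (-A) v = -expVal A v := by
  simp [expVal]

lemma uncert_neg (A : H →L[ℂ] H) (v : H) : uncert (-A) v = uncert A v := by
  simp [uncert, expVal_neg]

end Scaling

section ProjectionDifference

variable {H : Type*} [NormedAddCommGroup H] [InnerProductSpace ℂ H] {v w : H}

lemma inner_mul_inner_symm_eq_norm_sq (v w : H) :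
    ⟪v, w⟫_ℂ * ⟪w, v⟫_ℂ = ((‖⟪v, w⟫_ℂ‖ ^ 2 : ℝ) : ℂ) := by
  rw [← inner_conj_symm w v, Complex.mul_conj', Complex.ofReal_pow]

lemma rankOne_apply (x y z : H) : rankOne x y z = ⟪y, z⟫_ℂ • x := rfl

/-- For unit vectors `v` and `w`, the orthogonal projection onto the line `ℂ w` minus the one
onto `ℂ v`. It is the operator of the theorem before division by `sin θ`. -/
noncomputable def projectionDifference (v w : H) : H →L[ℂ] H := rankOne w w - rankOne v v

lemma neg_projectionDifference (v w : H) :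
    -projectionDifference v w = projectionDifference w v :=
  neg_sub _ _

lemma projectionDifference_apply_left (hv : ‖v‖ = 1) (w : H) :
    projectionDifference v w v = ⟪w, v⟫_ℂ • w - v := by
  simp only [projectionDifference, sub_apply, rankOne_apply,
    inner_self_eq_one_of_norm_eq_one hv, one_smul]

lemma projectionDifference_apply_right (v : H) (hw : ‖w‖ = 1) :
    projectionDifference v w w = w - ⟪v, w⟫_ℂ • v := by
  simp only [projectionDifference, sub_apply, rankOne_apply,
    inner_self_eq_one_of_norm_eq_one hw, one_smul]

lemma projectionDifference_apply_apply_left (hv : ‖v‖ = 1) (hw : ‖w‖ = 1) :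
    projectionDifference v w (projectionDifference v w v) =
      ((1 - ‖⟪v, w⟫_ℂ‖ ^ 2 : ℝ) : ℂ) • v :=
  calc projectionDifference v w (projectionDifference v w v)
      = ⟪w, v⟫_ℂ • (w - ⟪v, w⟫_ℂ • v) - (⟪w, v⟫_ℂ • w - v) := by
        rw [projectionDifference_apply_left hv, map_sub, map_smul,
          projectionDifference_apply_right v hw, projectionDifference_apply_left hv]
    _ = (1 - ⟪v, w⟫_ℂ * ⟪w, v⟫_ℂ) • v := by module
    _ = ((1 - ‖⟪v, w⟫_ℂ‖ ^ 2 : ℝ) : ℂ) • v := by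
        rw [inner_mul_inner_symm_eq_norm_sq, Complex.ofReal_sub, Complex.ofReal_one]

lemma expVal_projectionDifference_right (v : H) (hw : ‖w‖ = 1) :
    expVal (projectionDifference v w) w = 1 - ‖⟪v, w⟫_ℂ‖ ^ 2 := by
  rw [expVal, projectionDifference_apply_right v hw, inner_sub_right, inner_smul_right,
    inner_mul_inner_symm_eq_norm_sq, inner_self_eq_one_of_norm_eq_one hw, Complex.sub_re,
    Complex.one_re, Complex.ofReal_re]

lemma expVal_projectionDifference_left (hv : ‖v‖ = 1) (w : H) :
    expVal (projectionDifference v w) v = -(1 - ‖⟪v, w⟫_ℂ‖ ^ 2) := by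
  rw [← neg_projectionDifference, expVal_neg, expVal_projectionDifference_right w hv,
    norm_inner_symm]

lemma expVal_projectionDifference_right_sub_left (hv : ‖v‖ = 1) (hw : ‖w‖ = 1) :
    expVal (projectionDifference v w) w - expVal (projectionDifference v w) v =
      2 * (1 - ‖⟪v, w⟫_ℂ‖ ^ 2) := by
  rw [expVal_projectionDifference_right v hw, expVal_projectionDifference_left hv w]
  ring

lemma uncert_projectionDifference_left (hv : ‖v‖ = 1) (hw : ‖w‖ = 1) :
    uncert (projectionDifference v w) v = ‖⟪v, w⟫_ℂ‖ * √(1 - ‖⟪v, w⟫_ℂ‖ ^ 2) := by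
  have hsq : (⟪v, projectionDifference v w (projectionDifference v w v)⟫_ℂ).re =
      1 - ‖⟪v, w⟫_ℂ‖ ^ 2 := by
    rw [projectionDifference_apply_apply_left hv hw, inner_smul_right, Complex.re_ofReal_mul,
      inner_self_eq_one_of_norm_eq_one hv, Complex.one_re, mul_one]
  calc uncert (projectionDifference v w) v
      = √(‖⟪v, w⟫_ℂ‖ ^ 2 * (1 - ‖⟪v, w⟫_ℂ‖ ^ 2)) := by
        rw [uncert, hsq, expVal_projectionDifference_left hv w]
        ring_nf
    _ = ‖⟪v, w⟫_ℂ‖ * √(1 - ‖⟪v, w⟫_ℂ‖ ^ 2) := by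
        rw [Real.sqrt_mul (sq_nonneg _), Real.sqrt_sq (norm_nonneg _)]

lemma uncert_projectionDifference_right (hv : ‖v‖ = 1) (hw : ‖w‖ = 1) :
    uncert (projectionDifference v w) w = ‖⟪v, w⟫_ℂ‖ * √(1 - ‖⟪v, w⟫_ℂ‖ ^ 2) := by
  rw [← neg_projectionDifference, uncert_neg, uncert_projectionDifference_left hw hv,
    norm_inner_symm]

-- If `v` and `w` are orthogonal, both sides divide by zero; if they are parallel, the left side
-- is `0 / 0`.
lemma discern_projectionDifference (hv : ‖v‖ = 1) (hw : ‖w‖ = 1) :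
    discern (projectionDifference v w) v w = √(1 - ‖⟪v, w⟫_ℂ‖ ^ 2) / ‖⟪v, w⟫_ℂ‖ := by
  have hle : ‖⟪v, w⟫_ℂ‖ ≤ 1 := by simpa [hv, hw] using norm_inner_le_norm (𝕜 := ℂ) v w
  have hnonneg : 0 ≤ 1 - ‖⟪v, w⟫_ℂ‖ ^ 2 := sub_nonneg.mpr (pow_le_one₀ (norm_nonneg _) hle)
  rw [discern, expVal_projectionDifference_right_sub_left hv hw,
    uncert_projectionDifference_left hv hw, uncert_projectionDifference_right hv hw, ← two_mul,
    abs_of_nonneg (mul_nonneg zero_le_two hnonneg), mul_div_mul_left _ _ two_ne_zero,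
    mul_comm ‖⟪v, w⟫_ℂ‖, ← div_div, Real.div_sqrt]

end ProjectionDifference

theorem projection_difference_attains_bound_general {H : Type*} [NormedAddCommGroup H]
    [InnerProductSpace ℂ H] (v w : H) (hv : ‖v‖ = 1) (hw : ‖w‖ = 1)
    (θ : ℝ) (hθ : θ ∈ Set.Ioo 0 (Real.pi / 2)) (hcos : ‖⟪v, w⟫_ℂ‖ = Real.cos θ)
    (A : H →L[ℂ] H)
    (hA : A = ((Real.sin θ : ℝ) : ℂ)⁻¹ • (rankOne w w - rankOne v v)) :
    expVal A w - expVal A v = 2 * Real.sin θ ∧ discern A v w = Real.tan θ := by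
  have hsin : 0 < Real.sin θ :=
    Real.sin_pos_of_pos_of_lt_pi hθ.1 (hθ.2.trans (half_lt_self Real.pi_pos))
  have hsq : 1 - ‖⟪v, w⟫_ℂ‖ ^ 2 = Real.sin θ ^ 2 := by rw [hcos, Real.sin_sq]
  have hsmul : A = (((Real.sin θ)⁻¹ : ℝ) : ℂ) • projectionDifference v w := by
    rw [hA, Complex.ofReal_inv, projectionDifference]
  constructor
  · rw [hsmul, expVal_ofReal_smul, expVal_ofReal_smul, ← mul_sub,
      expVal_projectionDifference_right_sub_left hv hw, hsq]
    field_simp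
  · rw [hsmul, discern_ofReal_smul (inv_ne_zero hsin.ne'), discern_projectionDifference hv hw,
      hsq, hcos, Real.sqrt_sq hsin.le, Real.tan_eq_sin_div_cos]

/-- The operator `A = (w⟨w,·⟩ − v⟨v,·⟩)/sin θ` attains Fleming's bound and maximizes
the expectation difference. -/
theorem projection_difference_attains_bound {H : Type*} [NormedAddCommGroup H]
    [InnerProductSpace ℂ H] [CompleteSpace H] (v w : H) (hv : ‖v‖ = 1) (hw : ‖w‖ = 1)
    (θ : ℝ) (hθ : θ ∈ Set.Ioo 0 (Real.pi / 2)) (hcos : ⟪v, w⟫_ℂ = (Real.cos θ : ℂ))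
    (A : H →L[ℂ] H)
    (hA : A = ((Real.sin θ : ℝ) : ℂ)⁻¹ • (rankOne w w - rankOne v v)) :
    expVal A w - expVal A v = 2 * Real.sin θ ∧ discern A v w = Real.tan θ :=
  have hcos_pos : 0 < Real.cos θ := Real.cos_pos_of_mem_Ioo ⟨by linarith [hθ.1, hθ.2], hθ.2⟩
  projection_difference_attains_bound_general v w hv hw θ hθ
    (by rw [hcos, Complex.norm_of_nonneg hcos_pos.le]) A hA
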